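/- arXiv:2307.02197 — 2 statements merged into one kernel-verified Lean document; each statement's English description precedes it below -/
import Mathlib

section
/- For every real number t with 0 ≤ t ≤ 1, the complex number h(t) = 1 − 2·t·exp(πi(1−t)) is nonzero. -/
/-- For every real number `t` with `0 ≤ t ≤ 1`, the complex number
`h(t) = 1 − 2·t·exp(πi(1−t))` is nonzero. -/
theorem h_ne_zero_on_unit_interval (t : ℝ) (h0 : 0 ≤ t) (h1 : t ≤ 1) :
    (1 : ℂ) - 2 * (t : ℂ) * Complex.exp (Real.pi * Complex.I * (1 - (t : ℂ))) ≠ 0 := by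
  intro h
  rcases h0.eq_or_lt with rfl | h0
  · simp at h
  rcases h1.eq_or_lt with rfl | h1
  · norm_num at h
  have e : (Real.pi * Complex.I * (1 - (t : ℂ))) = ((Real.pi * (1 - t) : ℝ) : ℂ) * Complex.I := by
    push_cast; ring
  have e2 : (2 * (t : ℂ)) = ((2 * t : ℝ) : ℂ) := by push_cast; rfl
  rw [e, e2] at h
  have him := congrArg Complex.im h
  rw [Complex.sub_im, Complex.im_ofReal_mul, Complex.exp_ofReal_mul_I_im] at him
  simp only [Complex.one_im, Complex.zero_im] at him
  have hs : 0 < Real.sin (Real.pi * (1 - t)) := by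
    apply Real.sin_pos_of_pos_of_lt_pi
    · exact mul_pos Real.pi_pos (by linarith)
    · nlinarith [Real.pi_pos]
  have := mul_pos (mul_pos two_pos h0) hs
  linarith
end

section
/- Let R be a commutative ring and let x, y ∈ R be such that x is not a zero divisor in R and the image of y is not a zero divisor in R/(x) (i.e., x, y is a regular sequence). Consider the R-linear map f : R³ → R given by f(a,b,c) = a·x² + b·(x·y) + c·y². Then the kernel of f is the R-submodule of R³ generated by the two elements (y, −x, 0) and (0, y, −x). -/
/-- For a regular sequence `x, y` in a commutative ring `R`, the kernel of the
map `R³ → R`, `(a,b,c) ↦ a·x² + b·xy + c·y²`, is generated by `(y, −x, 0)` and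
`(0, y, −x)`. -/
theorem syzygies_of_square_of_regular_sequence (R : Type*) [CommRing R] (x y : R)
    (hx : ∀ a : R, a * x = 0 → a = 0)
    (hy : ∀ a : R, a * y ∈ Ideal.span {x} → a ∈ Ideal.span {x}) :
    ∀ v : R × R × R,
      v.1 * x ^ 2 + v.2.1 * (x * y) + v.2.2 * y ^ 2 = 0 ↔
        v ∈ Submodule.span R {((y, -x, 0) : R × R × R), ((0, y, -x) : R × R × R)} := by
  rintro ⟨a, b, c⟩
  simp only [Ideal.mem_span_singleton] at hy
  rw [Submodule.mem_span_pair]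
  constructor
  · intro h
    simp only at h
    obtain ⟨c', rfl⟩ : x ∣ c := by
      apply hy
      apply hy
      exact ⟨-(a * x + b * y), by linear_combination h⟩
    have h1 : a * x + b * y + c' * y ^ 2 = 0 := by
      apply hx
      linear_combination h
    obtain ⟨d, hd⟩ : x ∣ b + c' * y := by
      apply hy
      exact ⟨-a, by linear_combination h1⟩
    have h2 : a + d * y = 0 := by
      apply hx
      linear_combination h1 - y * hd
    refine ⟨-d, -c', ?_⟩
    simp only [Prod.smul_mk, Prod.mk_add_mk, smul_eq_mul, Prod.mk.injEq]
    refine ⟨?_, ?_, ?_⟩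
    · linear_combination -h2
    · linear_combination -hd
    · ring
  · rintro ⟨p, q, h⟩
    simp only [Prod.smul_mk, Prod.mk_add_mk, smul_eq_mul, Prod.mk.injEq] at h
    obtain ⟨rfl, rfl, rfl⟩ := h
    ring
end
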